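/- (Leakage under reduction.) Let P' be a primitive on (𝒳₀×𝒳₁)×(𝒴₀×𝒴₁), let P be a primitive on 𝒳×𝒴, and let δ ∈ [0,1]. Let G be the set of pairs (x₁,y₁) with P'_{X₁Y₁}(x₁,y₁) > 0 for which there exist bijections f : 𝒳 → 𝒳₀ and g : 𝒴 → 𝒴₀ such that for all (u,v), P'(X₀=f(u), Y₀=g(v) | X₁=x₁, Y₁=y₁) = P(u,v). If Σ_{(x₁,y₁)∈G} P'_{X₁Y₁}(x₁,y₁) ≥ 1 − δ, then Δ_{P'} ≥ (1−δ)·Δ_P. -/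

import Mathlib

open scoped BigOperators
open Matrix

noncomputable section

open scoped Classical in
/-- Base-2 von Neumann entropy of a matrix: minus the sum of `λ·log₂ λ` over the real
eigenvalues (with multiplicity) if the matrix is Hermitian, and `0` otherwise. -/
def vNE {n : Type*} [Fintype n] (ρ : Matrix n n ℂ) : ℝ :=
  if h : ρ.IsHermitian then -∑ i, h.eigenvalues i * Real.logb 2 (h.eigenvalues i) else 0

/-- Shannon entropy (base 2), with the convention `0·log₂ 0 = 0`. -/
def shannon {α : Type*} [Fintype α] (p : α → ℝ) : ℝ :=
  -∑ a, p a * Real.logb 2 (p a)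

/-- Marginal on the first component: `P_X`. -/
def margX {X Y : Type*} [Fintype Y] (P : X × Y → ℝ) (x : X) : ℝ := ∑ y, P (x, y)

/-- Marginal on the second component: `P_Y`. -/
def margY {X Y : Type*} [Fintype X] (P : X × Y → ℝ) (y : Y) : ℝ := ∑ x, P (x, y)

/-- Mutual information `I(X;Y)` of a joint distribution `P` (base 2). -/
def mutualInfo {X Y : Type*} [Fintype X] [Fintype Y] (P : X × Y → ℝ) : ℝ :=
  ∑ x, ∑ y, P (x, y) * Real.logb 2 (P (x, y) / (margX P x * margY P y))

/-- The regular embedding `ψ_θ(x,y) = e^{iθ(x,y)}·√(P(x,y))`. -/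
def regEmb {X Y : Type*} (P θ : X × Y → ℝ) (xy : X × Y) : ℂ :=
  Complex.exp (Complex.I * θ xy) * (Real.sqrt (P xy) : ℂ)

/-- Reduced density matrix `ρ_A(θ)` of the regular embedding `ψ_θ`. -/
def rhoA {X Y : Type*} [Fintype Y] (P θ : X × Y → ℝ) : Matrix X X ℂ :=
  Matrix.of fun x x' => ∑ y, regEmb P θ (x, y) * star (regEmb P θ (x', y))

/-- Reduced density matrix `ρ_B(θ)` of the regular embedding `ψ_θ`. -/
def rhoB {X Y : Type*} [Fintype X] (P θ : X × Y → ℝ) : Matrix Y Y ℂ :=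
  Matrix.of fun y y' => ∑ x, regEmb P θ (x, y) * star (regEmb P θ (x, y'))

/-- Leakage `Δ(ψ_θ) = S(ρ_B(θ)) − I(X;Y)` of a regular embedding. -/
def leakReg {X Y : Type*} [Fintype X] [Fintype Y] (P θ : X × Y → ℝ) : ℝ :=
  vNE (rhoB P θ) - mutualInfo P

/-- Leakage `Δ_P` of a primitive: the infimum of the leakage over all phase functions. -/
def leakPrim {X Y : Type*} [Fintype X] [Fintype Y] (P : X × Y → ℝ) : ℝ :=
  ⨅ θ : X × Y → ℝ, leakReg P θ

/-- The marginal `P'_{X₁Y₁}` of the second coordinates of a primitive on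
`(𝒳₀×𝒳₁)×(𝒴₀×𝒴₁)`. -/
def margX1Y1 {𝒳₀ 𝒳₁ 𝒴₀ 𝒴₁ : Type*} [Fintype 𝒳₀] [Fintype 𝒴₀]
    (P' : (𝒳₀ × 𝒳₁) × (𝒴₀ × 𝒴₁) → ℝ) (q : 𝒳₁ × 𝒴₁) : ℝ :=
  ∑ x₀, ∑ y₀, P' ((x₀, q.1), (y₀, q.2))

/-!
Leakage is compared with its conditional versions. If the first party also holds `X₁`, then
`ρ_B = ∑ ρ_B(x₁)` over the unnormalized conditionals, and the chain rules for the von Neumann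
entropy and the mutual information give

`Δ(ψ) - ∑ Δ(ψ_{x₁}) = ∑ (D(ρ_B(x₁) ‖ ρ_B) - D(diag ρ_B(x₁) ‖ diag ρ_B))`,

which is nonnegative because a measurement does not increase relative entropy. As both reductions of
a pure state have the same nonzero spectrum, the parties may be exchanged, so one can condition on
`Y₁` as well. Leakage is homogeneous and invariant under relabeling, so the conditionals isomorphic
to `P` contribute at least `(1 - δ) Δ_P`. The others contribute a nonnegative amount: conditioning
on all of `X` and `Y` leaves trivial primitives, whose leakage is `0`.

For the monotonicity of `D`, quantum relative entropy is written as the classical relative entropy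
of the Nussbaum–Szkoła distributions. Classical relative entropy is an integral over `t` of
`χ²`-functionals. For the Nussbaum–Szkoła distributions each of these is bounded below, for every
matrix `X`, by

`2 Re tr(X* σ) - (1 - t) tr(X* X ρ) - t tr(X* σ X)`,

and a suitable diagonal `X` turns this lower bound into the `χ²`-functional of the diagonals.
-/

section RelativeEntropy

variable {ι κ : Type*} [Fintype ι] [Fintype κ]

/-- Relative entropy `D(p‖q)` in bits of two nonnegative families, not necessarily normalized.
It is meaningful only if `p` vanishes wherever `q` does, since `Real.logb 2 0 = 0`. -/
def relEntropy (p q : ι → ℝ) : ℝ :=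
  ∑ i, p i * (Real.logb 2 (p i) - Real.logb 2 (q i))

/-- The `χ²`-type functional `∑ p² / ((1 - t) q + t p)`. Up to affine normalization it is the
`χ²`-divergence of `p` from the mixture `(1 - t) q + t p`. Relative entropy is obtained by
integrating it over `t`. -/
def skewChiSq (t : ℝ) (p q : ι → ℝ) : ℝ :=
  ∑ i, p i ^ 2 / ((1 - t) * q i + t * p i)

theorem mixture_pos {p q t : ℝ} (hp : 0 < p) (hq : 0 < q) (ht0 : 0 ≤ t) (ht1 : t ≤ 1) :
    0 < (1 - t) * q + t * p :=
  convex_Ioi (0 : ℝ) hq hp (sub_nonneg.2 ht1) ht0 (sub_add_cancel 1 t)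

variable {p q : ι → ℝ}

theorem hasDerivAt_sum_mul_log_mixture (hp : ∀ i, 0 ≤ p i) (hq : ∀ i, 0 ≤ q i)
    (hpq : ∀ i, q i = 0 → p i = 0) {t : ℝ} (ht0 : 0 ≤ t) (ht1 : t ≤ 1) :
    HasDerivAt (fun t : ℝ => ∑ i, p i * Real.log ((1 - t) * q i + t * p i))
      (∑ i, p i * ((p i - q i) / ((1 - t) * q i + t * p i))) t := by
  refine HasDerivAt.fun_sum fun i _ => ?_
  rcases (hp i).eq_or_lt with hi | hi
  · simpa [← hi] using hasDerivAt_const t (0 : ℝ)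
  have hqi : 0 < q i := (hq i).lt_of_ne' fun h => hi.ne' (hpq i h)
  have hmix : HasDerivAt (fun t : ℝ => (1 - t) * q i + t * p i) (p i - q i) t :=
    ((((hasDerivAt_id t).const_sub 1).mul_const (q i)).add
      ((hasDerivAt_id t).mul_const (p i))).congr_deriv (by ring)
  exact (hmix.log (mixture_pos hi hqi ht0 ht1).ne').const_mul _

theorem one_sub_mul_sum_mul_sub_div_mixture (hp : ∀ i, 0 ≤ p i) (hq : ∀ i, 0 ≤ q i)
    (hpq : ∀ i, q i = 0 → p i = 0) {t : ℝ} (ht0 : 0 ≤ t) (ht1 : t ≤ 1) :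
    (1 - t) * ∑ i, p i * ((p i - q i) / ((1 - t) * q i + t * p i)) =
      skewChiSq t p q - ∑ i, p i := by
  rw [skewChiSq, Finset.mul_sum, ← Finset.sum_sub_distrib]
  refine Finset.sum_congr rfl fun i _ => ?_
  rcases (hp i).eq_or_lt with hi | hi
  · simp [← hi]
  have hqi : 0 < q i := (hq i).lt_of_ne' fun h => hi.ne' (hpq i h)
  have hmix := (mixture_pos hi hqi ht0 ht1).ne'
  field_simp
  ring

theorem relEntropy_le_of_skewChiSq_le {p' q' : κ → ℝ}
    (hp : ∀ i, 0 ≤ p i) (hq : ∀ i, 0 ≤ q i) (hpq : ∀ i, q i = 0 → p i = 0)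
    (hp' : ∀ i, 0 ≤ p' i) (hq' : ∀ i, 0 ≤ q' i) (hpq' : ∀ i, q' i = 0 → p' i = 0)
    (hmass : ∑ i, p i = ∑ i, p' i)
    (hchi : ∀ t : ℝ, 0 < t → t < 1 → skewChiSq t p q ≤ skewChiSq t p' q') :
    relEntropy p q ≤ relEntropy p' q' := by
  let F : ℝ → ℝ := fun t => ∑ i, p' i * Real.log ((1 - t) * q' i + t * p' i) -
    ∑ i, p i * Real.log ((1 - t) * q i + t * p i)
  have hF : ∀ t ∈ Set.Icc (0 : ℝ) 1, HasDerivAt F _ t := fun t ht =>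
    (hasDerivAt_sum_mul_log_mixture hp' hq' hpq' ht.1 ht.2).sub
      (hasDerivAt_sum_mul_log_mixture hp hq hpq ht.1 ht.2)
  have hmono : MonotoneOn F (Set.Icc 0 1) := by
    refine monotoneOn_of_deriv_nonneg (convex_Icc 0 1)
      (HasDerivAt.continuousOn hF)
      (fun t ht => (hF t (interior_subset ht)).differentiableAt.differentiableWithinAt)
      fun t ht => ?_
    rw [(hF t (interior_subset ht)).deriv]
    rw [interior_Icc] at ht
    refine nonneg_of_mul_nonneg_right ?_ (sub_pos.2 ht.2)
    rw [mul_sub, one_sub_mul_sum_mul_sub_div_mixture hp' hq' hpq' ht.1.le ht.2.le,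
      one_sub_mul_sum_mul_sub_div_mixture hp hq hpq ht.1.le ht.2.le]
    linarith [hchi t ht.1 ht.2]
  have h01 : F 0 ≤ F 1 := hmono (by simp) (by simp) zero_le_one
  simp only [F, sub_zero, sub_self, zero_mul, one_mul, add_zero, zero_add] at h01
  simp only [relEntropy, Real.logb, ← sub_div, mul_div_assoc', ← Finset.sum_div]
  gcongr ?_ / _
  simp only [mul_sub, Finset.sum_sub_distrib]
  linarith

end RelativeEntropy

section Eigenbases

open scoped ComplexOrder

variable {n : Type*} [Fintype n] [DecidableEq n] {σ ρ : Matrix n n ℂ}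

/-- The matrix of `X` with respect to an eigenbasis of `ρ` in the source and an eigenbasis of
`σ` in the target. For `X = 1` its entries are the overlaps between the two eigenbases. -/
def inEigenbases (hσ : σ.IsHermitian) (hρ : ρ.IsHermitian) (X : Matrix n n ℂ) : Matrix n n ℂ :=
  star (hσ.eigenvectorUnitary : Matrix n n ℂ) * X * hρ.eigenvectorUnitary

/-- The first of the two Nussbaum–Szkoła distributions `|⟨u_j, v_k⟩|² s_j` and
`|⟨u_j, v_k⟩|² r_k` of `σ = ∑ s_j |u_j⟩⟨u_j|` and `ρ = ∑ r_k |v_k⟩⟨v_k|`, whose classical relative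
entropy is the quantum relative entropy of `σ` and `ρ`. -/
def nsFst (hσ : σ.IsHermitian) (hρ : ρ.IsHermitian) (a : n × n) : ℝ :=
  ‖inEigenbases hσ hρ 1 a.1 a.2‖ ^ 2 * hσ.eigenvalues a.1

/-- The second Nussbaum–Szkoła distribution `|⟨u_j, v_k⟩|² r_k`, see `nsFst`. -/
def nsSnd (hσ : σ.IsHermitian) (hρ : ρ.IsHermitian) (a : n × n) : ℝ :=
  ‖inEigenbases hσ hρ 1 a.1 a.2‖ ^ 2 * hρ.eigenvalues a.2

theorem trace_conjTranspose_mul_diagonal_mul_mul_diagonal {m R : Type*} [Fintype m]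
    [DecidableEq m] [CommSemiring R] [StarRing R] (A B : Matrix m n R) (a : m → R) (b : n → R) :
    (Aᴴ * diagonal a * B * diagonal b).trace =
      ∑ i : m × n, a i.1 * b i.2 * (star (A i.1 i.2) * B i.1 i.2) := by
  rw [Fintype.sum_prod_type_right, trace]
  refine Finset.sum_congr rfl fun k _ => ?_
  rw [diag_apply, mul_diagonal, Matrix.mul_apply, Finset.sum_mul]
  refine Finset.sum_congr rfl fun j _ => ?_
  rw [mul_diagonal, conjTranspose_apply]
  ring

theorem trace_conjTranspose_mul_cfc_mul_mul_cfc (hσ : σ.IsHermitian) (hρ : ρ.IsHermitian)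
    (X Y : Matrix n n ℂ) (f g : ℝ → ℝ) :
    (Xᴴ * cfc f σ * Y * cfc g ρ).trace = ∑ a : n × n,
      f (hσ.eigenvalues a.1) * g (hρ.eigenvalues a.2) *
        (star (inEigenbases hσ hρ X a.1 a.2) * inEigenbases hσ hρ Y a.1 a.2) := by
  rw [hσ.cfc_eq, hρ.cfc_eq, IsHermitian.cfc, IsHermitian.cfc, Unitary.conjStarAlgAut_apply,
    Unitary.conjStarAlgAut_apply, ← Matrix.mul_assoc, trace_mul_comm]
  refine Eq.trans (congrArg trace ?_) (trace_conjTranspose_mul_diagonal_mul_mul_diagonal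
    (inEigenbases hσ hρ X) (inEigenbases hσ hρ Y) (RCLike.ofReal ∘ f ∘ hσ.eigenvalues)
    (RCLike.ofReal ∘ g ∘ hρ.eigenvalues))
  simp only [inEigenbases, conjTranspose_mul, star_eq_conjTranspose, conjTranspose_conjTranspose,
    Matrix.mul_assoc]

theorem re_trace_conjTranspose_mul_cfc_mul_self_mul_cfc (hσ : σ.IsHermitian) (hρ : ρ.IsHermitian)
    (X : Matrix n n ℂ) (f g : ℝ → ℝ) :
    (Xᴴ * cfc f σ * X * cfc g ρ).trace.re = ∑ a : n × n,
      f (hσ.eigenvalues a.1) * g (hρ.eigenvalues a.2) * ‖inEigenbases hσ hρ X a.1 a.2‖ ^ 2 := by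
  rw [trace_conjTranspose_mul_cfc_mul_mul_cfc hσ hρ, Complex.re_sum]
  refine Finset.sum_congr rfl fun a _ => ?_
  rw [Complex.star_def, Complex.conj_mul']
  norm_cast

theorem re_trace_cfc_mul_cfc (hσ : σ.IsHermitian) (hρ : ρ.IsHermitian) (f g : ℝ → ℝ) :
    (cfc f σ * cfc g ρ).trace.re = ∑ a : n × n,
      f (hσ.eigenvalues a.1) * g (hρ.eigenvalues a.2) * ‖inEigenbases hσ hρ 1 a.1 a.2‖ ^ 2 := by
  simpa using re_trace_conjTranspose_mul_cfc_mul_self_mul_cfc hσ hρ 1 f g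

theorem nsFst_nonneg (hσ : σ.PosSemidef) (hρ : ρ.IsHermitian) (a : n × n) :
    0 ≤ nsFst hσ.1 hρ a :=
  mul_nonneg (sq_nonneg _) (hσ.eigenvalues_nonneg _)

theorem nsSnd_nonneg (hσ : σ.IsHermitian) (hρ : ρ.PosSemidef) (a : n × n) :
    0 ≤ nsSnd hσ hρ.1 a :=
  mul_nonneg (sq_nonneg _) (hρ.eigenvalues_nonneg _)

theorem sum_nsFst (hσ : σ.IsHermitian) (hρ : ρ.IsHermitian) :
    ∑ a, nsFst hσ hρ a = σ.trace.re := by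
  have h := re_trace_cfc_mul_cfc hσ hρ (fun x => x) (fun _ => 1)
  rw [cfc_id' ℝ σ hσ.isSelfAdjoint, cfc_const_one ℝ ρ hρ.isSelfAdjoint, Matrix.mul_one] at h
  simp [h, nsFst, mul_comm]

theorem inEigenbases_self (hσ : σ.IsHermitian) (hρ : ρ.IsHermitian) :
    inEigenbases hσ hρ σ =
      diagonal (fun j => (hσ.eigenvalues j : ℂ)) * inEigenbases hσ hρ 1 := by
  have hdiag := hσ.conjStarAlgAut_star_eigenvectorUnitary
  rw [Unitary.conjStarAlgAut_star_apply] at hdiag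
  have h : star (hσ.eigenvectorUnitary : Matrix n n ℂ) * σ =
      diagonal (RCLike.ofReal ∘ hσ.eigenvalues) * star (hσ.eigenvectorUnitary : Matrix n n ℂ) := by
    rw [← hdiag, Matrix.mul_assoc _ (hσ.eigenvectorUnitary : Matrix n n ℂ),
      Unitary.mul_star_self_of_mem (SetLike.coe_mem _), Matrix.mul_one]
  rw [inEigenbases, inEigenbases, Matrix.mul_one, h, Matrix.mul_assoc]
  rfl

theorem nsFst_eq_zero (hσ : σ.IsHermitian) (hρ : ρ.IsHermitian)
    (hker : ∀ v, ρ *ᵥ v = 0 → σ *ᵥ v = 0) {a : n × n} (ha : nsSnd hσ hρ a = 0) :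
    nsFst hσ hρ a = 0 := by
  rcases mul_eq_zero.1 ha with h | h
  · rw [nsFst, h, zero_mul]
  have hv : ρ *ᵥ hρ.eigenvectorBasis a.2 = 0 := by
    rw [hρ.mulVec_eigenvectorBasis, h, zero_smul]
  have hcol : inEigenbases hσ hρ σ a.1 a.2 =
      (star (hσ.eigenvectorUnitary : Matrix n n ℂ) *ᵥ (σ *ᵥ hρ.eigenvectorBasis a.2)) a.1 := by
    rw [inEigenbases, mulVec_mulVec]
    rfl
  rw [hker _ hv, mulVec_zero, Pi.zero_apply, inEigenbases_self, diagonal_mul, mul_eq_zero,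
    Complex.ofReal_eq_zero] at hcol
  rcases hcol with h0 | h0 <;> simp [nsFst, h0]

theorem two_mul_re_conj_mul_sub_le (a w : ℂ) {m s : ℝ} (hm : 0 ≤ m) (hs : m = 0 → s = 0) :
    2 * (s * (star a * w).re) - m * ‖a‖ ^ 2 ≤
      (‖w‖ ^ 2 * s) ^ 2 / (‖w‖ ^ 2 * m) := by
  rcases hm.eq_or_lt with rfl | hm
  · simp [hs rfl]
  rcases eq_or_ne w 0 with rfl | hw
  · simpa using mul_nonneg hm.le (sq_nonneg ‖a‖)
  have hre : s * (star a * w).re ≤ ‖a‖ * (|s| * ‖w‖) :=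
    calc s * (star a * w).re ≤ |s| * ‖star a * w‖ := by
          rw [← Complex.re_ofReal_mul, ← Real.norm_eq_abs, ← Complex.norm_real, ← norm_mul]
          exact Complex.re_le_norm _
      _ = ‖a‖ * (|s| * ‖w‖) := by rw [norm_mul, norm_star]; ring
  have hw' : ‖w‖ ≠ 0 := norm_ne_zero_iff.2 hw
  calc 2 * (s * (star a * w).re) - m * ‖a‖ ^ 2
      ≤ (|s| * ‖w‖) ^ 2 / m := by
        rw [le_div_iff₀ hm]
        nlinarith [sq_nonneg (|s| * ‖w‖ - m * ‖a‖)]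
    _ = (‖w‖ ^ 2 * s) ^ 2 / (‖w‖ ^ 2 * m) := by
        rw [mul_pow, sq_abs]
        field_simp

theorem two_mul_re_trace_sub_le_skewChiSq_ns (hσ : σ.PosSemidef) (hρ : ρ.PosSemidef)
    (X : Matrix n n ℂ) {t : ℝ} (ht0 : 0 < t) (ht1 : t < 1) :
    2 * (Xᴴ * σ).trace.re - ((1 - t) * (Xᴴ * X * ρ).trace.re + t * (Xᴴ * σ * X).trace.re) ≤
      skewChiSq t (nsFst hσ.1 hρ.1) (nsSnd hσ.1 hρ.1) := by
  have hσid := cfc_id' ℝ σ hσ.1.isSelfAdjoint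
  have hρid := cfc_id' ℝ ρ hρ.1.isSelfAdjoint
  have hσone := cfc_const_one ℝ σ hσ.1.isSelfAdjoint
  have hρone := cfc_const_one ℝ ρ hρ.1.isSelfAdjoint
  have hlin := congrArg Complex.re
    (trace_conjTranspose_mul_cfc_mul_mul_cfc hσ.1 hρ.1 X 1 (fun x => x) (fun _ => 1))
  have hquadρ :=
    re_trace_conjTranspose_mul_cfc_mul_self_mul_cfc hσ.1 hρ.1 X (fun _ => 1) (fun x => x)
  have hquadσ :=
    re_trace_conjTranspose_mul_cfc_mul_self_mul_cfc hσ.1 hρ.1 X (fun x => x) (fun _ => 1)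
  simp only [hσid, hρid, hσone, hρone, Complex.re_sum, Complex.ofReal_one, mul_one,
    one_mul, Complex.re_ofReal_mul] at hlin hquadρ hquadσ
  rw [hlin, hquadρ, hquadσ, Finset.mul_sum, Finset.mul_sum, Finset.mul_sum,
    ← Finset.sum_add_distrib, ← Finset.sum_sub_distrib]
  refine Finset.sum_le_sum fun a _ => ?_
  have hs := hσ.eigenvalues_nonneg a.1
  have hr := mul_nonneg (sub_pos.2 ht1).le (hρ.eigenvalues_nonneg a.2)
  refine (le_of_eq (by ring)).trans ((two_mul_re_conj_mul_sub_le (inEigenbases hσ.1 hρ.1 X a.1 a.2)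
    (inEigenbases hσ.1 hρ.1 1 a.1 a.2) (add_nonneg hr (mul_nonneg ht0.le hs)) fun h => ?_).trans
    (le_of_eq ?_))
  · exact (mul_eq_zero.1 (show t * _ = 0 by linarith [mul_nonneg ht0.le hs])).resolve_left ht0.ne'
  · rw [nsFst, nsSnd]
    congr 1
    ring

theorem skewChiSq_diag_le_skewChiSq_ns (hσ : σ.PosSemidef) (hρ : ρ.PosSemidef)
    {t : ℝ} (ht0 : 0 < t) (ht1 : t < 1) :
    skewChiSq t (fun i => (σ i i).re) (fun i => (ρ i i).re) ≤
      skewChiSq t (nsFst hσ.1 hρ.1) (nsSnd hσ.1 hρ.1) := by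
  -- Among diagonal matrices, this `X` maximizes the left side of the variational bound.
  let m : n → ℝ := fun i => (1 - t) * (ρ i i).re + t * (σ i i).re
  let X : Matrix n n ℂ := diagonal fun i => (((σ i i).re / m i : ℝ) : ℂ)
  have hX : Xᴴ = X := by simp [X, diagonal_conjTranspose, Pi.star_def]
  have hsq (p m : ℝ) : p ^ 2 / m = 2 * (p / m * p) - m * (p / m) ^ 2 := by
    rcases eq_or_ne m 0 with rfl | hm
    · simp
    · field_simp
      ring
  refine le_trans (le_of_eq ?_) (two_mul_re_trace_sub_le_skewChiSq_ns hσ hρ X ht0 ht1)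
  simp only [hX, Matrix.mul_assoc X X, trace, Complex.re_sum, Finset.mul_sum,
    ← Finset.sum_add_distrib, ← Finset.sum_sub_distrib, skewChiSq]
  refine Finset.sum_congr rfl fun i _ => ?_
  simp only [X, diag_apply, diagonal_mul, mul_diagonal, Complex.re_ofReal_mul,
    Complex.re_mul_ofReal, hsq, m]
  ring

end Eigenbases

section VonNeumannEntropy

open scoped ComplexOrder

variable {m n : Type*} [Fintype m] [Fintype n]

open scoped Classical in
theorem vNE_eq_neg_re_trace_cfc (A : Matrix n n ℂ) :
    vNE A = -(cfc (fun x : ℝ => x * Real.logb 2 x) A).trace.re := by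
  by_cases hA : A.IsHermitian
  · rw [vNE, dif_pos hA, hA.cfc_eq, IsHermitian.cfc, Unitary.conjStarAlgAut_apply,
      trace_mul_cycle, Unitary.coe_star_mul_self, Matrix.one_mul, trace_diagonal, Complex.re_sum]
    rfl
  · have hcfc : cfc (fun x : ℝ => x * Real.logb 2 x) A = 0 := cfc_apply_of_not_predicate A hA
    rw [vNE, dif_neg hA, hcfc, trace_zero, Complex.zero_re, neg_zero]

theorem vNE_smul {A : Matrix n n ℂ} (hA : A.IsHermitian) (c : ℝ) :
    vNE (c • A) = c * vNE A - c * Real.logb 2 c * A.trace.re := by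
  classical
  have hmul (x : ℝ) : c * x * Real.logb 2 (c * x) =
      c * Real.logb 2 c * x + c * (x * Real.logb 2 x) := by
    rcases eq_or_ne c 0 with rfl | hc
    · simp
    rcases eq_or_ne x 0 with rfl | hx
    · simp
    rw [Real.logb_mul hc hx]
    ring
  have hcfc : cfc (fun x : ℝ => x * Real.logb 2 x) (c • A) =
      (c * Real.logb 2 c) • A + c • cfc (fun x : ℝ => x * Real.logb 2 x) A := by
    have hfin := A.finite_real_spectrum
    have hself : IsSelfAdjoint A := hA
    rw [← cfc_comp_const_mul c _ A ((hfin.image _).continuousOn _) hself]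
    simp only [hmul]
    rw [cfc_add _ _ _ (hfin.continuousOn _) (hfin.continuousOn _), cfc_const_mul_id _ _ hself,
      cfc_const_mul _ _ _ (hfin.continuousOn _)]
  rw [vNE_eq_neg_re_trace_cfc, vNE_eq_neg_re_trace_cfc, hcfc, trace_add, trace_smul, trace_smul,
    Complex.add_re, Complex.smul_re, Complex.smul_re, smul_eq_mul, smul_eq_mul]
  ring

open scoped Classical in
theorem vNE_eq_neg_sum_roots_charpoly {A : Matrix n n ℂ} (hA : A.IsHermitian) :
    vNE A = -(A.charpoly.roots.map fun z => z.re * Real.logb 2 z.re).sum := by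
  rw [vNE, dif_pos hA, hA.roots_charpoly_eq_eigenvalues, Multiset.map_map]
  simp [Function.comp_def]

theorem vNE_submatrix_equiv {A : Matrix n n ℂ} (hA : A.IsHermitian) (e : m ≃ n) :
    vNE (A.submatrix e e) = vNE A := by
  classical
  have h : (A.submatrix e e).charpoly = A.charpoly := charpoly_reindex e.symm A
  rw [vNE_eq_neg_sum_roots_charpoly (hA.submatrix e), vNE_eq_neg_sum_roots_charpoly hA, ← h]

theorem vNE_transpose {A : Matrix n n ℂ} (hA : A.IsHermitian) : vNE Aᵀ = vNE A := by
  classical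
  rw [vNE_eq_neg_sum_roots_charpoly hA.transpose, vNE_eq_neg_sum_roots_charpoly hA,
    charpoly_transpose]

theorem vNE_mul_conjTranspose_comm (M : Matrix m n ℂ) : vNE (M * Mᴴ) = vNE (Mᴴ * M) := by
  classical
  have hX (k : ℕ) : (Polynomial.X ^ k : Polynomial ℂ) ≠ 0 := pow_ne_zero _ Polynomial.X_ne_zero
  have h := congrArg (fun p : Polynomial ℂ =>
    (p.roots.map fun z => z.re * Real.logb 2 z.re).sum) (charpoly_mul_comm' M Mᴴ)
  simp only [Polynomial.roots_mul (mul_ne_zero (hX _) (charpoly_monic _).ne_zero),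
    Polynomial.roots_pow, Polynomial.roots_X, Multiset.map_add, Multiset.map_nsmul,
    Multiset.sum_add, Multiset.sum_nsmul, Multiset.map_singleton, Multiset.sum_singleton,
    Complex.zero_re, zero_mul, smul_zero, zero_add] at h
  rw [vNE_eq_neg_sum_roots_charpoly (isHermitian_mul_conjTranspose_self M),
    vNE_eq_neg_sum_roots_charpoly (isHermitian_conjTranspose_mul_self M), h]

theorem vNE_of_unique [Unique n] {A : Matrix n n ℂ} (hA : A.IsHermitian) :
    vNE A = -((A default default).re * Real.logb 2 (A default default).re) := by
  have h := congrArg Complex.re hA.trace_eq_sum_eigenvalues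
  simp only [trace, Fintype.sum_unique, diag_apply] at h
  rw [vNE, dif_pos hA, Fintype.sum_unique, h]
  rfl

open scoped Classical in
/-- Umegaki's quantum relative entropy `tr σ (log σ − log ρ)` in bits. It is meaningful only if
`ker ρ ⊆ ker σ`, since the functional calculus uses `Real.logb 2 0 = 0`. -/
def qRelEntropy (σ ρ : Matrix n n ℂ) : ℝ :=
  -vNE σ - (σ * cfc (Real.logb 2) ρ).trace.re

variable {σ ρ : Matrix n n ℂ}

open scoped Classical in
theorem relEntropy_ns_eq_qRelEntropy (hσ : σ.IsHermitian) (hρ : ρ.IsHermitian)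
    (hker : ∀ v, ρ *ᵥ v = 0 → σ *ᵥ v = 0) :
    relEntropy (nsFst hσ hρ) (nsSnd hσ hρ) = qRelEntropy σ ρ := by
  have hent := re_trace_cfc_mul_cfc hσ hρ (fun x => x * Real.logb 2 x) (fun _ => 1)
  have hcross := re_trace_cfc_mul_cfc hσ hρ (fun x => x) (Real.logb 2)
  rw [cfc_const_one ℝ ρ hρ.isSelfAdjoint, Matrix.mul_one] at hent
  rw [cfc_id' ℝ σ hσ.isSelfAdjoint] at hcross
  rw [qRelEntropy, vNE_eq_neg_re_trace_cfc, neg_neg, hent, hcross, ← Finset.sum_sub_distrib]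
  refine Finset.sum_congr rfl fun a _ => ?_
  rcases eq_or_ne (nsFst hσ hρ a) 0 with h | h
  · rw [h]
    rcases mul_eq_zero.1 h with h | h <;> simp [h]
  have h' : nsSnd hσ hρ a ≠ 0 := fun h' => h (nsFst_eq_zero hσ hρ hker h')
  rw [nsFst, mul_ne_zero_iff] at h
  rw [nsSnd, mul_ne_zero_iff] at h'
  rw [nsFst, nsSnd, Real.logb_mul h.1 h.2, Real.logb_mul h'.1 h'.2]
  ring

theorem mulVec_eq_zero_of_le {𝕜 : Type*} [RCLike 𝕜] {σ ρ : Matrix n n 𝕜} (hσ : σ.PosSemidef)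
    (hle : (ρ - σ).PosSemidef) {v : n → 𝕜} (hv : ρ *ᵥ v = 0) : σ *ᵥ v = 0 := by
  have h := hle.dotProduct_mulVec_nonneg v
  rw [sub_mulVec, hv, zero_sub, dotProduct_neg, neg_nonneg] at h
  exact (hσ.dotProduct_mulVec_zero_iff v).1 (h.antisymm (hσ.dotProduct_mulVec_nonneg v))

theorem apply_self_eq_zero_of_ker_le {𝕜 : Type*} [RCLike 𝕜] {σ ρ : Matrix n n 𝕜}
    (hρ : ρ.PosSemidef) (hker : ∀ v, ρ *ᵥ v = 0 → σ *ᵥ v = 0) {i : n} (hi : ρ i i = 0) :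
    σ i i = 0 := by
  classical
  have hρe : ρ *ᵥ Pi.single i 1 = 0 := by
    rw [← hρ.dotProduct_mulVec_zero_iff]
    simpa using hi
  simpa using congrFun (hker _ hρe) i

theorem relEntropy_diag_le_qRelEntropy (hσ : σ.PosSemidef) (hρ : ρ.PosSemidef)
    (hker : ∀ v, ρ *ᵥ v = 0 → σ *ᵥ v = 0) :
    relEntropy (fun i => (σ i i).re) (fun i => (ρ i i).re) ≤ qRelEntropy σ ρ := by
  classical
  have hdiag {A : Matrix n n ℂ} (hA : A.PosSemidef) (i : n) : 0 ≤ (A i i).re :=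
    (Complex.le_def.1 hA.diag_nonneg).1
  rw [← relEntropy_ns_eq_qRelEntropy hσ.1 hρ.1 hker]
  refine relEntropy_le_of_skewChiSq_le (hdiag hσ) (hdiag hρ)
    (fun i hi => by
      have hρi : ρ i i = 0 := Complex.ext hi (Complex.le_def.1 hρ.diag_nonneg).2.symm
      rw [apply_self_eq_zero_of_ker_le hρ hker hρi, Complex.zero_re])
    (nsFst_nonneg hσ hρ.1) (nsSnd_nonneg hσ.1 hρ) (fun a => nsFst_eq_zero hσ.1 hρ.1 hker) ?_
    fun t => skewChiSq_diag_le_skewChiSq_ns hσ hρ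
  rw [sum_nsFst, trace, Complex.re_sum]
  rfl

theorem sum_qRelEntropy_sum {ι : Type*} [Fintype ι] (σ : ι → Matrix n n ℂ)
    (hσ : (∑ z, σ z).IsHermitian) :
    ∑ z, qRelEntropy (σ z) (∑ z, σ z) = vNE (∑ z, σ z) - ∑ z, vNE (σ z) := by
  classical
  have hcfc : cfc (fun x : ℝ => x * Real.logb 2 x) (∑ z, σ z) =
      (∑ z, σ z) * cfc (Real.logb 2) (∑ z, σ z) := by
    have hfin := (∑ z, σ z).finite_real_spectrum
    rw [cfc_mul (fun x => x) _ _ (hfin.continuousOn _) (hfin.continuousOn _),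
      cfc_id' ℝ _ hσ.isSelfAdjoint]
  rw [vNE_eq_neg_re_trace_cfc (∑ z, σ z), hcfc, Finset.sum_mul, trace_sum, Complex.re_sum]
  simp only [qRelEntropy, Finset.sum_sub_distrib, Finset.sum_neg_distrib]
  ring

/-- The Holevo bound for the measurement in the standard basis. -/
theorem sum_relEntropy_diag_le_vNE_sub_sum_vNE {ι : Type*} [Fintype ι] {σ : ι → Matrix n n ℂ}
    (hσ : ∀ z, (σ z).PosSemidef) :
    ∑ z, relEntropy (fun i => (σ z i i).re) (fun i => ((∑ z, σ z) i i).re) ≤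
      vNE (∑ z, σ z) - ∑ z, vNE (σ z) := by
  classical
  have hsum := posSemidef_sum Finset.univ fun z _ => hσ z
  rw [← sum_qRelEntropy_sum σ hsum.1]
  refine Finset.sum_le_sum fun z _ => relEntropy_diag_le_qRelEntropy (hσ z) hsum fun v =>
    mulVec_eq_zero_of_le (hσ z) ?_
  rw [← Finset.sum_erase_eq_sub (Finset.mem_univ z)]
  exact posSemidef_sum _ fun z _ => hσ z

end VonNeumannEntropy

section Embedding

open scoped ComplexOrder

variable {X Y : Type*} (P θ : X × Y → ℝ)

theorem regEmb_mul_star_self (hP : 0 ≤ P) (z : X × Y) :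
    regEmb P θ z * star (regEmb P θ z) = (P z : ℂ) := by
  have hnorm : ‖regEmb P θ z‖ = √(P z) := by
    rw [regEmb, norm_mul, mul_comm Complex.I, Complex.norm_exp_ofReal_mul_I, one_mul,
      Complex.norm_real, Real.norm_of_nonneg (Real.sqrt_nonneg _)]
  rw [Complex.star_def, Complex.mul_conj', hnorm, ← Complex.ofReal_pow, Real.sq_sqrt (hP z)]

theorem regEmb_smul {c : ℝ} (hc : 0 ≤ c) (z : X × Y) :
    regEmb (c • P) θ z = √c * regEmb P θ z := by
  rw [regEmb, regEmb, Pi.smul_apply, smul_eq_mul, Real.sqrt_mul hc, Complex.ofReal_mul,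
    mul_left_comm]

variable [Fintype X]

theorem rhoB_eq_mul_conjTranspose :
    rhoB P θ = (of fun y x => regEmb P θ (x, y)) * (of fun y x => regEmb P θ (x, y))ᴴ := by
  ext y y'
  simp [rhoB, Matrix.mul_apply]

theorem rhoB_posSemidef [Finite Y] : (rhoB P θ).PosSemidef := by
  rw [rhoB_eq_mul_conjTranspose]
  exact posSemidef_self_mul_conjTranspose _

theorem rhoB_apply_self_re (hP : 0 ≤ P) (y : Y) : (rhoB P θ y y).re = margY P y := by
  simp only [rhoB, of_apply, regEmb_mul_star_self P θ hP, margY, Complex.re_sum,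
    Complex.ofReal_re]

theorem trace_rhoB_re [Fintype Y] (hP : 0 ≤ P) :
    (rhoB P θ).trace.re = ∑ x, ∑ y, P (x, y) := by
  rw [trace, Complex.re_sum, Finset.sum_comm]
  exact Finset.sum_congr rfl fun y _ => rhoB_apply_self_re P θ hP y

theorem rhoB_smul {c : ℝ} (hc : 0 ≤ c) : rhoB (c • P) θ = c • rhoB P θ := by
  ext y y'
  simp only [rhoB, of_apply, Matrix.smul_apply, Finset.smul_sum, regEmb_smul P θ hc]
  refine Finset.sum_congr rfl fun x _ => ?_
  have hsq : (√c : ℂ) * √c = c := by rw [← Complex.ofReal_mul, Real.mul_self_sqrt hc]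
  rw [star_mul', Complex.star_def, Complex.conj_ofReal, mul_mul_mul_comm, hsq,
    Complex.real_smul]

end Embedding

section MutualInfo

variable {X Y : Type*} {P : X × Y → ℝ}

theorem margX_pos [Fintype Y] (hP : 0 ≤ P) {x : X} {y : Y} (h : P (x, y) ≠ 0) :
    0 < margX P x :=
  Finset.sum_pos' (fun _ _ => hP _) ⟨y, Finset.mem_univ y, (hP _).lt_of_ne' h⟩

theorem margY_pos [Fintype X] (hP : 0 ≤ P) {x : X} {y : Y} (h : P (x, y) ≠ 0) :
    0 < margY P y :=
  Finset.sum_pos' (fun _ _ => hP _) ⟨x, Finset.mem_univ x, (hP _).lt_of_ne' h⟩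

theorem margX_smul [Fintype Y] (c : ℝ) : margX (c • P) = c • margX P := by
  ext x
  simp [margX, Finset.mul_sum]

theorem margY_smul [Fintype X] (c : ℝ) : margY (c • P) = c • margY P := by
  ext y
  simp [margY, Finset.mul_sum]

variable [Fintype X] [Fintype Y]

theorem mutualInfo_eq_sum_mul_logb_sub (hP : 0 ≤ P) :
    mutualInfo P = ∑ x, ∑ y, P (x, y) *
      (Real.logb 2 (P (x, y)) - Real.logb 2 (margX P x) - Real.logb 2 (margY P y)) := by
  refine Finset.sum_congr rfl fun x _ => Finset.sum_congr rfl fun y _ => ?_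
  rcases eq_or_ne (P (x, y)) 0 with h | h
  · simp [h]
  have hX := (margX_pos hP h).ne'
  have hY := (margY_pos hP h).ne'
  rw [Real.logb_div h (mul_ne_zero hX hY), Real.logb_mul hX hY, sub_sub]

theorem mutualInfo_smul (hP : 0 ≤ P) {c : ℝ} (hc : 0 ≤ c) :
    mutualInfo (c • P) = c * mutualInfo P - c * Real.logb 2 c * ∑ x, ∑ y, P (x, y) := by
  rw [mutualInfo_eq_sum_mul_logb_sub (smul_nonneg hc hP), mutualInfo_eq_sum_mul_logb_sub hP]
  simp only [Finset.mul_sum, ← Finset.sum_sub_distrib]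
  refine Finset.sum_congr rfl fun x _ => Finset.sum_congr rfl fun y _ => ?_
  rcases eq_or_ne c 0 with rfl | hc
  · simp
  rcases eq_or_ne (P (x, y)) 0 with h | h
  · simp [h]
  simp only [margX_smul, margY_smul, Pi.smul_apply, smul_eq_mul]
  rw [Real.logb_mul hc h, Real.logb_mul hc (margX_pos hP h).ne',
    Real.logb_mul hc (margY_pos hP h).ne']
  ring

theorem mutualInfo_swap : mutualInfo (P ∘ Prod.swap) = mutualInfo P := by
  rw [mutualInfo, mutualInfo, Finset.sum_comm]
  refine Finset.sum_congr rfl fun x _ => Finset.sum_congr rfl fun y _ => ?_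
  simp only [Function.comp_apply, Prod.swap_prod_mk]
  rw [mul_comm (margX P x)]
  rfl

theorem mutualInfo_comp_prodMap {X' Y' : Type*} [Fintype X'] [Fintype Y'] (f : X' ≃ X)
    (g : Y' ≃ Y) : mutualInfo (P ∘ Prod.map f g) = mutualInfo P := by
  have hX (x : X') : margX (P ∘ Prod.map f g) x = margX P (f x) :=
    g.sum_comp fun y => P (f x, y)
  have hY (y : Y') : margY (P ∘ Prod.map f g) y = margY P (g y) :=
    f.sum_comp fun x => P (x, g y)
  simp only [mutualInfo, hX, hY, Function.comp_apply, Prod.map_apply]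
  rw [← f.sum_comp]
  exact Finset.sum_congr rfl fun x _ => g.sum_comp fun y =>
    P (f x, y) * Real.logb 2 (P (f x, y) / (margX P (f x) * margY P y))

end MutualInfo

section LeakReg

variable {X Y : Type*} [Fintype X] [Fintype Y] (P θ : X × Y → ℝ)

theorem vNE_rhoB_swap :
    vNE (rhoB (P ∘ Prod.swap) (θ ∘ Prod.swap)) = vNE (rhoB P θ) := by
  have hM : rhoB (P ∘ Prod.swap) (θ ∘ Prod.swap) =
      ((of fun y x => regEmb P θ (x, y))ᴴ * (of fun y x => regEmb P θ (x, y)))ᵀ := by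
    ext x x'
    simp only [rhoB, of_apply, transpose_apply, Matrix.mul_apply, conjTranspose_apply]
    exact Finset.sum_congr rfl fun y _ => mul_comm _ _
  rw [hM, vNE_transpose (isHermitian_conjTranspose_mul_self _), ← vNE_mul_conjTranspose_comm,
    rhoB_eq_mul_conjTranspose]

theorem leakReg_swap : leakReg (P ∘ Prod.swap) (θ ∘ Prod.swap) = leakReg P θ := by
  rw [leakReg, leakReg, mutualInfo_swap, vNE_rhoB_swap]

theorem leakReg_comp_prodMap {X' Y' : Type*} [Fintype X'] [Fintype Y'] (f : X' ≃ X)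
    (g : Y' ≃ Y) : leakReg (P ∘ Prod.map f g) (θ ∘ Prod.map f g) = leakReg P θ := by
  have hrho : rhoB (P ∘ Prod.map f g) (θ ∘ Prod.map f g) = (rhoB P θ).submatrix g g := by
    ext y y'
    exact f.sum_comp fun x => regEmb P θ (x, g y) * star (regEmb P θ (x, g y'))
  rw [leakReg, leakReg, mutualInfo_comp_prodMap, hrho,
    vNE_submatrix_equiv (rhoB_posSemidef P θ).1]

variable {P}

theorem leakReg_smul (hP : 0 ≤ P) {c : ℝ} (hc : 0 ≤ c) :
    leakReg (c • P) θ = c * leakReg P θ := by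
  rw [leakReg, leakReg, rhoB_smul P θ hc, vNE_smul (rhoB_posSemidef P θ).1,
    mutualInfo_smul hP hc, trace_rhoB_re P θ hP]
  ring

theorem leakReg_of_unique {X Y : Type*} [Unique X] [Unique Y] {P : X × Y → ℝ} (hP : 0 ≤ P)
    (θ : X × Y → ℝ) : leakReg P θ = 0 := by
  rw [leakReg, vNE_of_unique (rhoB_posSemidef P θ).1, rhoB_apply_self_re P θ hP,
    mutualInfo_eq_sum_mul_logb_sub hP]
  simp [margX, margY]

end LeakReg

section Slices

/-- The unnormalized conditional of `P` given `X₁ = x₁`, for a first party holding `(X₀, X₁)`. -/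
def sliceX {X₀ X₁ Y : Type*} (P : (X₀ × X₁) × Y → ℝ) (x₁ : X₁) : X₀ × Y → ℝ :=
  fun z => P ((z.1, x₁), z.2)

/-- The unnormalized conditional of `P` given `Y₁ = y₁`, for a second party holding `(Y₀, Y₁)`. -/
def sliceY {X Y₀ Y₁ : Type*} (P : X × (Y₀ × Y₁) → ℝ) (y₁ : Y₁) : X × Y₀ → ℝ :=
  fun z => P (z.1, (z.2, y₁))

/-- The unnormalized conditional of `P` given `(X₁, Y₁) = q`: the distribution
`P(X₀, Y₀ | q)` scaled by the factor `margX1Y1 P q`. -/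
def slice {X₀ X₁ Y₀ Y₁ : Type*} (P : (X₀ × X₁) × (Y₀ × Y₁) → ℝ) (q : X₁ × Y₁) :
    X₀ × Y₀ → ℝ :=
  sliceY (sliceX P q.1) q.2

theorem slice_nonneg {X₀ X₁ Y₀ Y₁ : Type*} {P : (X₀ × X₁) × (Y₀ × Y₁) → ℝ} (hP : 0 ≤ P)
    (q : X₁ × Y₁) : 0 ≤ slice P q :=
  fun z => hP ((z.1, q.1), (z.2, q.2))

variable {X₀ X₁ Y : Type*} [Fintype X₀] [Fintype X₁]

theorem rhoB_eq_sum_sliceX (P θ : (X₀ × X₁) × Y → ℝ) :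
    rhoB P θ = ∑ x₁, rhoB (sliceX P x₁) (sliceX θ x₁) := by
  ext y y'
  rw [Matrix.sum_apply]
  exact Fintype.sum_prod_type_right _

variable [Fintype Y]

theorem mutualInfo_eq_sum_sliceX {P : (X₀ × X₁) × Y → ℝ} (hP : 0 ≤ P) :
    mutualInfo P =
      ∑ x₁, (mutualInfo (sliceX P x₁) + relEntropy (margY (sliceX P x₁)) (margY P)) := by
  rw [mutualInfo_eq_sum_mul_logb_sub hP, Fintype.sum_prod_type_right]
  refine Finset.sum_congr rfl fun x₁ _ => ?_
  have hrel : relEntropy (margY (sliceX P x₁)) (margY P) = ∑ x₀, ∑ y, sliceX P x₁ (x₀, y) *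
      (Real.logb 2 (margY (sliceX P x₁) y) - Real.logb 2 (margY P y)) := by
    rw [Finset.sum_comm]
    exact Finset.sum_congr rfl fun y _ => Finset.sum_mul _ _ _
  rw [mutualInfo_eq_sum_mul_logb_sub (P := sliceX P x₁) fun z => hP _, hrel,
    ← Finset.sum_add_distrib]
  refine Finset.sum_congr rfl fun x₀ _ => ?_
  rw [← Finset.sum_add_distrib]
  refine Finset.sum_congr rfl fun y _ => ?_
  rw [← mul_add, sub_add_sub_cancel]
  rfl

theorem sum_leakReg_sliceX_le {P : (X₀ × X₁) × Y → ℝ} (hP : 0 ≤ P) (θ : (X₀ × X₁) × Y → ℝ) :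
    ∑ x₁, leakReg (sliceX P x₁) (sliceX θ x₁) ≤ leakReg P θ := by
  have hslice (x₁ : X₁) : 0 ≤ sliceX P x₁ := fun z => hP _
  have hHolevo := sum_relEntropy_diag_le_vNE_sub_sum_vNE fun x₁ =>
    rhoB_posSemidef (sliceX P x₁) (sliceX θ x₁)
  simp only [← rhoB_eq_sum_sliceX, rhoB_apply_self_re P θ hP,
    rhoB_apply_self_re _ _ (hslice _)] at hHolevo
  have hinfo := mutualInfo_eq_sum_sliceX hP
  rw [Finset.sum_add_distrib] at hinfo
  simp only [leakReg, Finset.sum_sub_distrib]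
  linarith

theorem sum_leakReg_sliceY_le {X Y₀ Y₁ : Type*} [Fintype X] [Fintype Y₀] [Fintype Y₁]
    {P : X × (Y₀ × Y₁) → ℝ} (hP : 0 ≤ P) (θ : X × (Y₀ × Y₁) → ℝ) :
    ∑ y₁, leakReg (sliceY P y₁) (sliceY θ y₁) ≤ leakReg P θ :=
  calc ∑ y₁, leakReg (sliceY P y₁) (sliceY θ y₁)
      = ∑ y₁, leakReg (sliceX (P ∘ Prod.swap) y₁) (sliceX (θ ∘ Prod.swap) y₁) :=
        Finset.sum_congr rfl fun _ _ => (leakReg_swap _ _).symm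
    _ ≤ leakReg (P ∘ Prod.swap) (θ ∘ Prod.swap) := sum_leakReg_sliceX_le (fun _ => hP _) _
    _ = leakReg P θ := leakReg_swap P θ

variable {Y₀ Y₁ : Type*} [Fintype Y₀] [Fintype Y₁]

theorem sum_leakReg_slice_le {P : (X₀ × X₁) × (Y₀ × Y₁) → ℝ} (hP : 0 ≤ P)
    (θ : (X₀ × X₁) × (Y₀ × Y₁) → ℝ) :
    ∑ q, leakReg (slice P q) (slice θ q) ≤ leakReg P θ := by
  rw [Fintype.sum_prod_type]
  exact (Finset.sum_le_sum fun x₁ _ =>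
    sum_leakReg_sliceY_le (P := sliceX P x₁) (fun _ => hP _) (sliceX θ x₁)).trans
      (sum_leakReg_sliceX_le hP θ)

end Slices

section LeakPrim

variable {X Y : Type*} [Fintype X] [Fintype Y] {P : X × Y → ℝ}

theorem leakReg_nonneg (hP : 0 ≤ P) (θ : X × Y → ℝ) : 0 ≤ leakReg P θ := by
  -- Slicing along the full outputs leaves one-point primitives, which do not leak.
  let f : Unit × X ≃ X := Equiv.punitProd X
  let g : Unit × Y ≃ Y := Equiv.punitProd Y
  have hcomp : 0 ≤ P ∘ Prod.map f g := fun _ => hP _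
  calc 0 = ∑ q, leakReg (slice (P ∘ Prod.map f g) q) (slice (θ ∘ Prod.map f g) q) :=
        Eq.symm (Finset.sum_eq_zero fun q _ => leakReg_of_unique (slice_nonneg hcomp q) _)
    _ ≤ leakReg (P ∘ Prod.map f g) (θ ∘ Prod.map f g) := sum_leakReg_slice_le hcomp _
    _ = leakReg P θ := leakReg_comp_prodMap P θ f g

theorem leakPrim_le_leakReg (hP : 0 ≤ P) (θ : X × Y → ℝ) : leakPrim P ≤ leakReg P θ :=
  ciInf_le ⟨0, Set.forall_mem_range.2 (leakReg_nonneg hP)⟩ θ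

theorem leakPrim_nonneg (hP : 0 ≤ P) : 0 ≤ leakPrim P :=
  Real.iInf_nonneg (leakReg_nonneg hP)

theorem leakPrim_smul (hP : 0 ≤ P) {c : ℝ} (hc : 0 ≤ c) :
    leakPrim (c • P) = c * leakPrim P := by
  simp only [leakPrim, leakReg_smul _ hP hc, Real.mul_iInf_of_nonneg hc]

theorem leakPrim_comp_prodMap {X' Y' : Type*} [Fintype X'] [Fintype Y'] (P : X × Y → ℝ)
    (f : X' ≃ X) (g : Y' ≃ Y) : leakPrim (P ∘ Prod.map f g) = leakPrim P := by
  have hsurj : Function.Surjective fun θ : X × Y → ℝ => θ ∘ Prod.map f g :=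
    (f.prodCongr g).injective.surjective_comp_right
  exact (hsurj.iInf_congr _ fun θ => leakReg_comp_prodMap P θ f g).symm

theorem sum_leakPrim_slice_le {X₀ X₁ Y₀ Y₁ : Type*} [Fintype X₀] [Fintype X₁] [Fintype Y₀]
    [Fintype Y₁] {P : (X₀ × X₁) × (Y₀ × Y₁) → ℝ} (hP : 0 ≤ P) :
    ∑ q, leakPrim (slice P q) ≤ leakPrim P :=
  le_ciInf fun θ =>
    calc ∑ q, leakPrim (slice P q)
        ≤ ∑ q, leakReg (slice P q) (slice θ q) :=
          Finset.sum_le_sum fun q _ => leakPrim_le_leakReg (slice_nonneg hP q) _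
      _ ≤ leakReg P θ := sum_leakReg_slice_le hP θ

theorem leakPrim_slice_eq_mul {X₀ X₁ Y₀ Y₁ : Type*} [Fintype X₀] [Fintype Y₀]
    {P' : (X₀ × X₁) × (Y₀ × Y₁) → ℝ} {q : X₁ × Y₁} (hP : 0 ≤ P) (hq : 0 < margX1Y1 P' q)
    (f : X ≃ X₀) (g : Y ≃ Y₀)
    (h : ∀ u v, P' ((f u, q.1), (g v, q.2)) / margX1Y1 P' q = P (u, v)) :
    leakPrim (slice P' q) = margX1Y1 P' q * leakPrim P := by
  have hscale : slice P' q ∘ Prod.map f g = margX1Y1 P' q • P := funext fun z =>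
    ((div_eq_iff hq.ne').1 (h z.1 z.2)).trans (mul_comm _ _)
  rw [← leakPrim_comp_prodMap _ f g, hscale, leakPrim_smul hP hq.le]

end LeakPrim

open scoped Classical in
/-- **Leakage under reduction.** If, except on a set of `(x₁,y₁)` of
probability at most `δ`, the conditional distribution of `(X₀,Y₀)` given `(x₁,y₁)` agrees
with `P` up to relabeling, then `Δ_{P'} ≥ (1−δ)·Δ_P`. -/
theorem leakPrim_reduction
    {𝒳₀ 𝒳₁ 𝒴₀ 𝒴₁ 𝒳 𝒴 : Type*}
    [Fintype 𝒳₀] [Fintype 𝒳₁] [Fintype 𝒴₀] [Fintype 𝒴₁] [Fintype 𝒳] [Fintype 𝒴]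
    [Nonempty 𝒳₀] [Nonempty 𝒳₁] [Nonempty 𝒴₀] [Nonempty 𝒴₁] [Nonempty 𝒳] [Nonempty 𝒴]
    (P' : (𝒳₀ × 𝒳₁) × (𝒴₀ × 𝒴₁) → ℝ) (hP'0 : ∀ z, 0 ≤ P' z) (hP'1 : ∑ z, P' z = 1)
    (P : 𝒳 × 𝒴 → ℝ) (hP0 : ∀ xy, 0 ≤ P xy) (hP1 : ∑ xy, P xy = 1)
    (δ : ℝ) (hδ0 : 0 ≤ δ) (hδ1 : δ ≤ 1)
    (hG : 1 - δ ≤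
      ∑ q ∈ Finset.univ.filter (fun q : 𝒳₁ × 𝒴₁ =>
          0 < margX1Y1 P' q ∧
            ∃ f : 𝒳 ≃ 𝒳₀, ∃ g : 𝒴 ≃ 𝒴₀, ∀ u v,
              P' ((f u, q.1), (g v, q.2)) / margX1Y1 P' q = P (u, v)),
        margX1Y1 P' q) :
    (1 - δ) * leakPrim P ≤ leakPrim P' := by
  set G : Finset (𝒳₁ × 𝒴₁) := Finset.univ.filter fun q => 0 < margX1Y1 P' q ∧
    ∃ f : 𝒳 ≃ 𝒳₀, ∃ g : 𝒴 ≃ 𝒴₀, ∀ u v, P' ((f u, q.1), (g v, q.2)) / margX1Y1 P' q = P (u, v)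
  have hslice : ∀ q ∈ G, leakPrim (slice P' q) = margX1Y1 P' q * leakPrim P := fun q hq => by
    obtain ⟨hpos, f, g, hfg⟩ := (Finset.mem_filter.1 hq).2
    exact leakPrim_slice_eq_mul hP0 hpos f g hfg
  calc (1 - δ) * leakPrim P
      ≤ (∑ q ∈ G, margX1Y1 P' q) * leakPrim P :=
        mul_le_mul_of_nonneg_right hG (leakPrim_nonneg hP0)
    _ = ∑ q ∈ G, leakPrim (slice P' q) := by
        rw [Finset.sum_mul, Finset.sum_congr rfl hslice]
    _ ≤ ∑ q, leakPrim (slice P' q) :=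
        Finset.sum_le_univ_sum_of_nonneg fun q => leakPrim_nonneg (slice_nonneg hP'0 q)
    _ ≤ leakPrim P' := sum_leakPrim_slice_le hP'0
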